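/- Let t ∈ (0,1) and a ∈ [-1,1]. Set r = (1+t²)/(2t) and ρ = √(r²-a²) - (1-t²)/(2t). Then 0 ≤ ρ ≤ t, a²·t/(2√2) ≤ t - ρ ≤ √2·a²·t, and a²·t²/(2√2) ≤ t² - ρ² ≤ 2√2·a²·t². -/

import Mathlib

open MeasureTheory Metric Real Set Filter RealInnerProductSpace
open scoped ENNReal

noncomputable section

/-- Euclidean space ℝ^d. -/
abbrev Ed (d : ℕ) := EuclideanSpace ℝ (Fin d)

/-- The constant `A_{d,α}`. -/
noncomputable def fracConst (d : ℕ) (α : ℝ) : ℝ :=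
  α * 2 ^ (α - 1) * π ^ (-(d : ℝ) / 2) * Real.Gamma (((d : ℝ) + α) / 2) / Real.Gamma (1 - α / 2)

/-- The fractional Laplacian `Δ^{α/2} Φ (x)` exists and equals `L`. -/
def fracLapAt (d : ℕ) (α : ℝ) (Φ : Ed d → ℝ) (x : Ed d) (L : ℝ) : Prop :=
  Filter.Tendsto
    (fun ε : ℝ => fracConst d α *
      ∫ y in {y : Ed d | ε < ‖y - x‖}, (Φ y - Φ x) * ‖y - x‖ ^ (-(d : ℝ) - α))
    (nhdsWithin 0 (Set.Ioi 0)) (nhds L)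

/-- The last coordinate of a vector in ℝ^d. -/
def lastCoord (d : ℕ) (x : Ed d) : ℝ :=
  if h : 0 < d then x ⟨d - 1, Nat.sub_lt h Nat.one_pos⟩ else 0

/-- The unit vector `e_d = (0,…,0,1)`. -/
def eLast (d : ℕ) : Ed d :=
  if h : 0 < d then EuclideanSpace.single ⟨d - 1, Nat.sub_lt h Nat.one_pos⟩ (1 : ℝ) else 0

/-- The right circular cone `Γ_Θ` of angle `Θ`. -/
def cone (d : ℕ) (Θ : ℝ) : Set (Ed d) := {x | ‖x‖ * Real.cos Θ < lastCoord d x}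

/-- The unit sphere `S^{d-1}` in ℝ^d. -/
def unitSphere (d : ℕ) : Set (Ed d) := Metric.sphere (0 : Ed d) 1

/-- The spherical cap `B_Θ`. -/
def capB (d : ℕ) (Θ : ℝ) : Set (Ed d) := {θ | θ ∈ unitSphere d ∧ Real.cos Θ < lastCoord d θ}

/-- The surface measure `σ`: the (d-1)-dimensional Hausdorff measure. -/
noncomputable def sphMeasure (d : ℕ) : Measure (Ed d) := μH[(d : ℝ) - 1]

/-- The kernel `u_λ(t)`. -/
noncomputable def uKernel (d : ℕ) (α lam t : ℝ) : ℝ :=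
  ∫ r in Set.Ioi (0 : ℝ), r ^ ((d : ℝ) + lam - 1) * (r ^ 2 - 2 * r * t + 1) ^ (-((d : ℝ) + α) / 2)

/-- The kernel `u_λ(t)` as a value in `[0,∞]`. -/
noncomputable def uKernelE (d : ℕ) (α lam t : ℝ) : ℝ≥0∞ :=
  ∫⁻ r in Set.Ioi (0 : ℝ),
    ENNReal.ofReal (r ^ ((d : ℝ) + lam - 1) * (r ^ 2 - 2 * r * t + 1) ^ (-((d : ℝ) + α) / 2))

/-- The spherical fractional Laplacian `Δ_S^{α/2} φ (η)` exists and equals `L`. -/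
def sphFracLapAt (d : ℕ) (α : ℝ) (φ : Ed d → ℝ) (η : Ed d) (L : ℝ) : Prop :=
  Filter.Tendsto
    (fun ε : ℝ => fracConst d α *
      ∫ θ in {θ : Ed d | θ ∈ unitSphere d ∧ ⟪θ, η⟫ ≤ Real.cos ε},
        (φ θ - φ η) * uKernel d α 0 ⟪θ, η⟫ ∂(sphMeasure d))
    (nhdsWithin 0 (Set.Ioi 0)) (nhds L)

/-- The integrand of the radial operator `R_λ`. -/
noncomputable def RopIntegrand (d : ℕ) (α lam : ℝ) (φ : Ed d → ℝ) (η θ : Ed d) : ℝ :=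
  φ θ * (uKernel d α lam ⟪θ, η⟫ - uKernel d α 0 ⟪θ, η⟫)

/-- The radial operator `R_λ φ (η)`. -/
noncomputable def Rop (d : ℕ) (α lam : ℝ) (φ : Ed d → ℝ) (η : Ed d) : ℝ :=
  fracConst d α * ∫ θ in unitSphere d, RopIntegrand d α lam φ η θ ∂(sphMeasure d)

/-- The modulus `ω`. -/
noncomputable def omegaFn (α Θ : ℝ) : ℝ :=
  if α < 1 then Θ ^ α else if α = 1 then Θ * |Real.log Θ| else Θ

/-- The Euler beta function. -/
noncomputable def eulerBeta (a b : ℝ) : ℝ := Real.Gamma a * Real.Gamma b / Real.Gamma (a + b)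

/-- The constant `B_{d,α}`. -/
noncomputable def Bconst (d : ℕ) (α : ℝ) : ℝ :=
  Real.Gamma (((d : ℝ) + α) / 2) / (π ^ ((3 : ℝ) / 2) * Real.Gamma (((d : ℝ) - 1 + α) / 2)) *
    Real.sin (π * α / 2) * eulerBeta (1 + α / 2) (((d : ℝ) - 1) / 2)

/-- The constant `C_{d-1,α}`. -/
noncomputable def Cexit (d : ℕ) (α : ℝ) : ℝ :=
  Real.Gamma (((d : ℝ) - 1) / 2) /
    (2 ^ α * Real.Gamma (((d : ℝ) - 1 + α) / 2) * Real.Gamma (1 + α / 2))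

/-- The constant `C̃_{d,α}`. -/
noncomputable def Ctilde (d : ℕ) (α : ℝ) : ℝ :=
  π ^ (((d : ℝ) - 1) / 2) / Real.Gamma (((d : ℝ) - 1) / 2) * Cexit d α *
    eulerBeta (1 + α / 2) (((d : ℝ) - 1) / 2)

/-- The norm `|ỹ|` of the first `d-1` coordinates of `y`. -/
noncomputable def tnorm (d : ℕ) (y : Ed d) : ℝ :=
  Real.sqrt (∑ i : Fin d, if (i : ℕ) < d - 1 then (y i) ^ 2 else 0)

/-- The function `s_ε`. -/
noncomputable def sExit (d : ℕ) (α ε : ℝ) (y : Ed d) : ℝ :=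
  Cexit d α * (max (ε ^ 2 - tnorm d y ^ 2) 0) ^ (α / 2)

/-- The cylinder `Π_ε`. -/
def cylPi (d : ℕ) (ε : ℝ) : Set (Ed d) := {y | tnorm d y < ε}

/-- The hyperplane `F = {y : y_d = 1}`. -/
def hyperF (d : ℕ) : Set (Ed d) := {y | lastCoord d y = 1}

/-- The Riesz kernel `h(y) = |y|^{α-d}`. -/
noncomputable def rieszH (d : ℕ) (α : ℝ) (y : Ed d) : ℝ := ‖y‖ ^ (α - (d : ℝ))

/-- The inversion `T x = x/|x|²`. -/
noncomputable def inversion (d : ℕ) (x : Ed d) : Ed d := (‖x‖ ^ 2)⁻¹ • x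

/-- The shifted cone `V_Θ = Γ_Θ + e_d/2`. -/
def Vcone (d : ℕ) (Θ : ℝ) : Set (Ed d) := {y | y - (1 / 2 : ℝ) • eLast d ∈ cone d Θ}

/-- The spindle `L_ε = T(V_Θ)` with `ε = tan(Θ/2)`, i.e. `Θ = 2 arctan ε`. -/
def Lspindle (d : ℕ) (ε : ℝ) : Set (Ed d) := inversion d '' Vcone d (2 * Real.arctan ε)

/-- The curvilinear projection `y* = T(e_d/2 + (Ty - e_d/2)/(2|Ty - e_d/2|))`. -/
noncomputable def ystar (d : ℕ) (y : Ed d) : Ed d :=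
  inversion d ((1 / 2 : ℝ) • eLast d +
    (2 * ‖inversion d y - (1 / 2 : ℝ) • eLast d‖)⁻¹ • (inversion d y - (1 / 2 : ℝ) • eLast d))

open scoped Classical in
/-- The function `s*_ε`. -/
noncomputable def sStar (d : ℕ) (α ε : ℝ) (y : Ed d) : ℝ :=
  if y ∈ Lspindle d ε then Cexit d α * (max (ε ^ 2 - tnorm d (ystar d y) ^ 2) 0) ^ (α / 2)
  else 0

open scoped Classical in
/-- The function `u = K(h s*_ε)`, i.e. `u(y) = s*_ε(Ty)`, `u(0) = 0`. -/
noncomputable def uFn (d : ℕ) (α ε : ℝ) (y : Ed d) : ℝ :=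
  if y = 0 then 0 else sStar d α ε (inversion d y)

/-- The spherical profile `φ_Θ`. -/
noncomputable def profileFn (d : ℕ) (α Θ : ℝ) (θ : Ed d) : ℝ :=
  2 ^ α * Cexit d α *
    (max (Real.tan (Θ / 2) ^ 2 - ‖eLast d - θ‖ ^ 2 / ‖eLast d + θ‖ ^ 2) 0) ^ (α / 2)

/-- Laplacian on ℝ^d as the sum of pure second partial derivatives. -/
noncomputable def lapE (d : ℕ) (u : Ed d → ℝ) (x : Ed d) : ℝ :=
  ∑ i : Fin d,
    iteratedFDeriv ℝ 2 u x ![EuclideanSpace.single i (1 : ℝ), EuclideanSpace.single i (1 : ℝ)]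

/-- Laplacian on ℝ^d × ℝ as the sum of the d+1 pure second partial derivatives. -/
noncomputable def lapProd (d : ℕ) (U : Ed d × ℝ → ℝ) (p : Ed d × ℝ) : ℝ :=
  (∑ i : Fin d, iteratedFDeriv ℝ 2 U p
      ![(EuclideanSpace.single i (1 : ℝ), (0 : ℝ)), (EuclideanSpace.single i (1 : ℝ), (0 : ℝ))]) +
    iteratedFDeriv ℝ 2 U p ![((0 : Ed d), (1 : ℝ)), ((0 : Ed d), (1 : ℝ))]

/-- The Poisson kernel `P_t(x)` for the upper half-space. -/
noncomputable def poissonK (d : ℕ) (t : ℝ) (x : Ed d) : ℝ :=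
  Real.Gamma (((d : ℝ) + 1) / 2) / π ^ (((d : ℝ) + 1) / 2) * t *
    (‖x‖ ^ 2 + t ^ 2) ^ (-((d : ℝ) + 1) / 2)

end

/-!
The circle has its centre at distance `c = (1 - t²) / (2t)` behind the axis, so that `r = c + t`
and `r² = c² + 1`. Its equation `(ρ + c)² + a² = r²` then factors as `(t - ρ) (1 + t ρ) = a² t`.
As `0 ≤ ρ ≤ t`, the second factor lies between `1` and `1 + t²`, so `t - ρ` is comparable to
`a² t`, and multiplying by `t ≤ t + ρ ≤ 2t` gives the bounds for `t² - ρ²`.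
-/

/-- The radius `r` of the circle through `e_d` and `-e_d` that meets the hyperplane `{z_d = 0}` at
distance `t` from the axis; division by zero makes it `0` at `t = 0`, where the circle degenerates
to a line. -/
noncomputable def circleRadius (t : ℝ) : ℝ := (1 + t ^ 2) / (2 * t)

/-- The distance from the axis to the centre of the same circle, counted positively when the centre
lies on the side opposite to the crossing point at distance `t`. -/
noncomputable def circleOffset (t : ℝ) : ℝ := (1 - t ^ 2) / (2 * t)

/-- The distance `ρ = |z̃|` from the axis to the point `z` of the same circle at height `z_d = a`,
on the side of the centre where the circle crosses the hyperplane `{z_d = 0}` at distance `t`. It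
is signed, being negative where the circle has crossed the axis; at heights that the circle does
not reach, the square root is `0`. -/
noncomputable def axisDist (t a : ℝ) : ℝ := √(circleRadius t ^ 2 - a ^ 2) - circleOffset t

section Circle

variable {t a : ℝ}

lemma two_mul_mul_circleOffset (ht : t ≠ 0) : 2 * t * circleOffset t = 1 - t ^ 2 :=
  mul_div_cancel₀ _ (mul_ne_zero two_ne_zero ht)

lemma circleRadius_eq_circleOffset_add (ht : t ≠ 0) : circleRadius t = circleOffset t + t := by
  unfold circleRadius circleOffset
  field_simp
  ring

lemma circleRadius_sq (ht : t ≠ 0) : circleRadius t ^ 2 = circleOffset t ^ 2 + 1 := by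
  rw [circleRadius_eq_circleOffset_add ht]
  linear_combination two_mul_mul_circleOffset ht

lemma circleRadius_pos (ht : 0 < t) : 0 < circleRadius t := by
  unfold circleRadius
  positivity

lemma one_le_circleRadius (ht : 0 < t) : 1 ≤ circleRadius t := by
  refine (one_le_sq_iff₀ (circleRadius_pos ht).le).1 ?_
  rw [circleRadius_sq ht.ne']
  exact le_add_of_nonneg_left (sq_nonneg _)

lemma axisDist_nonneg (ht : t ≠ 0) (ha : |a| ≤ 1) : 0 ≤ axisDist t a := by
  refine sub_nonneg.2 (Real.le_sqrt_of_sq_le ?_)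
  linarith [circleRadius_sq ht, (sq_le_one_iff_abs_le_one a).2 ha]

lemma axisDist_le (ht : 0 < t) : axisDist t a ≤ t := by
  have hsqrt : √(circleRadius t ^ 2 - a ^ 2) ≤ circleRadius t :=
    Real.sqrt_le_iff.2 ⟨(circleRadius_pos ht).le, sub_le_self _ (sq_nonneg a)⟩
  rw [circleRadius_eq_circleOffset_add ht.ne'] at hsqrt
  rw [axisDist, circleRadius_eq_circleOffset_add ht.ne']
  linarith

lemma axisDist_add_circleOffset_sq (ha : |a| ≤ circleRadius t) :
    (axisDist t a + circleOffset t) ^ 2 = circleRadius t ^ 2 - a ^ 2 := by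
  rw [axisDist, sub_add_cancel]
  exact Real.sq_sqrt (sub_nonneg.2 (sq_le_sq' (abs_le.1 ha).1 (abs_le.1 ha).2))

lemma sub_axisDist_mul_one_add (ht : t ≠ 0) (ha : |a| ≤ circleRadius t) :
    (t - axisDist t a) * (1 + t * axisDist t a) = a ^ 2 * t := by
  have hcircle := axisDist_add_circleOffset_sq ha
  rw [circleRadius_sq ht] at hcircle
  linear_combination axisDist t a * two_mul_mul_circleOffset ht - t * hcircle

lemma div_one_add_sq_le_sub_axisDist (ht : 0 < t) (ha : |a| ≤ circleRadius t) :
    a ^ 2 * t / (1 + t ^ 2) ≤ t - axisDist t a := by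
  have hle : axisDist t a ≤ t := axisDist_le ht
  rw [div_le_iff₀ (by positivity), sq t]
  calc a ^ 2 * t = (t - axisDist t a) * (1 + t * axisDist t a) :=
        (sub_axisDist_mul_one_add ht.ne' ha).symm
    _ ≤ (t - axisDist t a) * (1 + t * t) := by gcongr

lemma sub_axisDist_le (ht : 0 < t) (ha : |a| ≤ 1) : t - axisDist t a ≤ a ^ 2 * t := by
  rw [← sub_axisDist_mul_one_add ht.ne' (ha.trans (one_le_circleRadius ht))]
  refine le_mul_of_one_le_right (sub_nonneg.2 (axisDist_le ht)) (le_add_of_nonneg_right ?_)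
  exact mul_nonneg ht.le (axisDist_nonneg ht.ne' ha)

lemma div_one_add_sq_le_sq_sub_axisDist_sq (ht : 0 < t) (ha : |a| ≤ 1) :
    a ^ 2 * t ^ 2 / (1 + t ^ 2) ≤ t ^ 2 - axisDist t a ^ 2 := by
  have hle : axisDist t a ≤ t := axisDist_le ht
  calc a ^ 2 * t ^ 2 / (1 + t ^ 2) = t * (a ^ 2 * t / (1 + t ^ 2)) := by ring
    _ ≤ t * (t - axisDist t a) := by
        gcongr
        exact div_one_add_sq_le_sub_axisDist ht (ha.trans (one_le_circleRadius ht))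
    _ ≤ (t + axisDist t a) * (t - axisDist t a) := by
        gcongr
        exact le_add_of_nonneg_right (axisDist_nonneg ht.ne' ha)
    _ = t ^ 2 - axisDist t a ^ 2 := (sq_sub_sq _ _).symm

lemma sq_sub_axisDist_sq_le (ht : 0 < t) (ha : |a| ≤ 1) :
    t ^ 2 - axisDist t a ^ 2 ≤ 2 * a ^ 2 * t ^ 2 := by
  have hle : axisDist t a ≤ t := axisDist_le ht
  calc t ^ 2 - axisDist t a ^ 2 = (t + axisDist t a) * (t - axisDist t a) := sq_sub_sq _ _
    _ ≤ (t + t) * (a ^ 2 * t) := by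
        gcongr
        exact sub_axisDist_le ht ha
    _ = 2 * a ^ 2 * t ^ 2 := by ring

theorem curvilinear_projection_estimates_general (ht : 0 < t) (ha : |a| ≤ 1) :
    0 ≤ axisDist t a ∧ axisDist t a ≤ t ∧
    a ^ 2 * t / (1 + t ^ 2) ≤ t - axisDist t a ∧ t - axisDist t a ≤ a ^ 2 * t ∧
    a ^ 2 * t ^ 2 / (1 + t ^ 2) ≤ t ^ 2 - axisDist t a ^ 2 ∧
    t ^ 2 - axisDist t a ^ 2 ≤ 2 * a ^ 2 * t ^ 2 :=
  ⟨axisDist_nonneg ht.ne' ha, axisDist_le ht,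
    div_one_add_sq_le_sub_axisDist ht (ha.trans (one_le_circleRadius ht)), sub_axisDist_le ht ha,
    div_one_add_sq_le_sq_sub_axisDist_sq ht ha, sq_sub_axisDist_sq_le ht ha⟩

end Circle

/-- geometric estimates for the curvilinear projection:
with `r = (1+t²)/(2t)` and `ρ = √(r²-a²) - (1-t²)/(2t)` one has `0 ≤ ρ ≤ t`,
 `a²t/(2√2) ≤ t - ρ ≤ √2 a² t` and `a²t²/(2√2) ≤ t² - ρ² ≤ 2√2 a² t²`. -/
theorem curvilinear_projection_estimates (t : ℝ) (ht : t ∈ Set.Ioo (0 : ℝ) 1)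
    (a : ℝ) (ha : a ∈ Set.Icc (-1 : ℝ) 1) :
    0 ≤ Real.sqrt (((1 + t ^ 2) / (2 * t)) ^ 2 - a ^ 2) - (1 - t ^ 2) / (2 * t) ∧
    Real.sqrt (((1 + t ^ 2) / (2 * t)) ^ 2 - a ^ 2) - (1 - t ^ 2) / (2 * t) ≤ t ∧
    a ^ 2 * t / (2 * Real.sqrt 2) ≤
      t - (Real.sqrt (((1 + t ^ 2) / (2 * t)) ^ 2 - a ^ 2) - (1 - t ^ 2) / (2 * t)) ∧
    t - (Real.sqrt (((1 + t ^ 2) / (2 * t)) ^ 2 - a ^ 2) - (1 - t ^ 2) / (2 * t)) ≤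
      Real.sqrt 2 * a ^ 2 * t ∧
    a ^ 2 * t ^ 2 / (2 * Real.sqrt 2) ≤
      t ^ 2 - (Real.sqrt (((1 + t ^ 2) / (2 * t)) ^ 2 - a ^ 2) - (1 - t ^ 2) / (2 * t)) ^ 2 ∧
    t ^ 2 - (Real.sqrt (((1 + t ^ 2) / (2 * t)) ^ 2 - a ^ 2) - (1 - t ^ 2) / (2 * t)) ^ 2 ≤
      2 * Real.sqrt 2 * a ^ 2 * t ^ 2 := by
  obtain ⟨ht0, ht1⟩ := ht
  obtain ⟨h_nonneg, h_le, h_lower, h_upper, h_sq_lower, h_sq_upper⟩ :=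
    curvilinear_projection_estimates_general ht0 (abs_le.2 ha)
  have hsqrt : 1 ≤ √2 := Real.one_le_sqrt.2 one_le_two
  have hden : 1 + t ^ 2 ≤ 2 * √2 := by linarith [pow_le_one₀ (n := 2) ht0.le ht1.le]
  refine ⟨h_nonneg, h_le, le_trans ?_ h_lower, h_upper.trans ?_, le_trans ?_ h_sq_lower,
    h_sq_upper.trans ?_⟩
  · gcongr
  · gcongr
    exact le_mul_of_one_le_left (sq_nonneg a) hsqrt
  · gcongr
  · gcongr
    exact le_mul_of_one_le_right zero_le_two hsqrt
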